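/- Let G be a connected graph of order m ≥ 3 and size e with χ(G) = χ_la(G), and let n ≥ 4 satisfy m ≡ n (mod 2) and m ≥ n²/2. Then χ_la(G ∨ O_n) = χ_la(G) + 1. -/

import Mathlib

open scoped BigOperators

/-- The induced vertex sum: sum of labels of edges incident to `v`. -/
noncomputable def vertexSum {V : Type*} (G : SimpleGraph V) (f : Sym2 V → ℕ) (v : V) : ℕ :=
  ∑ᶠ e ∈ G.incidenceSet v, f e

/-- `f` is a local antimagic labeling of `G`: a bijection from the edge set onto
`{1, …, |E(G)|}` such that adjacent vertices get distinct induced sums. -/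
def IsLocalAntimagic {V : Type*} (G : SimpleGraph V) (f : Sym2 V → ℕ) : Prop :=
  Set.BijOn f G.edgeSet (Set.Icc 1 G.edgeSet.ncard) ∧
  ∀ u v, G.Adj u v → vertexSum G f u ≠ vertexSum G f v

/-- Number of distinct induced vertex labels of the labeling `f`. -/
noncomputable def colorCount {V : Type*} (G : SimpleGraph V) (f : Sym2 V → ℕ) : ℕ :=
  (Set.range (vertexSum G f)).ncard

/-- The local antimagic chromatic number. -/
noncomputable def chiLA {V : Type*} (G : SimpleGraph V) : ℕ :=
  sInf { n | ∃ f, IsLocalAntimagic G f ∧ colorCount G f = n }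

/-- The join `G ∨ Oₙ` of `G` with the empty graph on `n` vertices. -/
def joinEmpty {V : Type*} (G : SimpleGraph V) (n : ℕ) : SimpleGraph (V ⊕ Fin n) :=
  SimpleGraph.fromRel (fun x y =>
    (∃ a b, x = Sum.inl a ∧ y = Sum.inl b ∧ G.Adj a b) ∨ (x.isLeft ∧ y.isRight))

/-!
Write `e` and `m` for the size and order of `G`. Label the edge from the vertex `u` of `G` to the
`j`-th new vertex by `e + a u j` for an `m × n` magic rectangle `a`. Then the labels of the vertices
of `G` all grow by the same amount, so they take as many values as before, and the new vertices
share one label. For `n ^ 2 ≤ 2 * m` the new label is the largest one, since a vertex of degree `d`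
has label at most `d * e - d * (d - 1) / 2` in `G`. Conversely, the vertex labels of a local
antimagic labeling of the join color it properly, and a new vertex needs a color that does not occur
on `G`.

Magic rectangles are built in centred form, as integer arrays with zero row and column sums whose
entries are `±x` with `x` in a given set. A zero-sum tuple placed in a column next to its negative
keeps both kinds of sums zero. This reduces even sides to splitting an arithmetic progression into
zero-sum quadruples, that is, into pairs of pairs with equal difference, and possibly one sextuple.
For odd sides a `3 × 3` core is bordered by zero-sum triples around an array with even sides.
-/

/-- `k` signed tuples of length `w` and sum `σ` whose entries are nonzero and have pairwise distinct
absolute values, all of them in `S`. A pair of numbers at distance `d` is a `2`-tuple of sum `d`. -/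
def HasSignedTuples (k w : ℕ) (σ : ℤ) (S : Set ℕ) : Prop :=
  ∃ v : Fin k → Fin w → ℤ, (∀ i, ∑ j, v i j = σ) ∧ (∀ i j, v i j ≠ 0 ∧ (v i j).natAbs ∈ S) ∧
    Function.Injective2 fun i j ↦ (v i j).natAbs

/-- A `p × q` integer array with pairwise distinct entries, all row and column sums zero, and the
absolute values of the entries in `S`. For `S = {x < p * q | x ≢ p * q (mod 2)}` this is a magic
rectangle with its mean subtracted and its entries doubled. -/
def HasZeroSumArray (p q : ℕ) (S : Set ℕ) : Prop :=
  ∃ a : Fin p → Fin q → ℤ, (∀ i, ∑ j, a i j = 0) ∧ (∀ j, ∑ i, a i j = 0) ∧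
    Function.Injective2 a ∧ ∀ i j, (a i j).natAbs ∈ S

namespace HasSignedTuples

variable {ι κ : Type*} [Fintype ι] [Fintype κ] {k l w w' : ℕ} {σ σ' : ℤ} {S S' : Set ℕ}

theorem of_fintype (hι : Fintype.card ι = k) (hκ : Fintype.card κ = w) (v : ι → κ → ℤ)
    (hsum : ∀ i, ∑ j, v i j = σ) (hmem : ∀ i j, v i j ≠ 0 ∧ (v i j).natAbs ∈ S)
    (hinj : Function.Injective2 fun i j ↦ (v i j).natAbs) : HasSignedTuples k w σ S := by
  let e := (Fintype.equivFinOfCardEq hι).symm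
  let f := (Fintype.equivFinOfCardEq hκ).symm
  exact ⟨fun i j ↦ v (e i) (f j), fun i ↦ (f.sum_comp (v (e i))).trans (hsum _),
    fun _ _ ↦ hmem _ _, fun _ _ _ _ h ↦ (hinj h).imp (e.injective ·) (f.injective ·)⟩

theorem mono (h : HasSignedTuples k w σ S) (hS : S ⊆ S') : HasSignedTuples k w σ S' := by
  obtain ⟨v, hsum, hmem, hinj⟩ := h
  exact ⟨v, hsum, fun i j ↦ ⟨(hmem i j).1, hS (hmem i j).2⟩, hinj⟩

theorem neg (h : HasSignedTuples k w σ S) : HasSignedTuples k w (-σ) S := by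
  obtain ⟨v, hsum, hmem, hinj⟩ := h
  refine ⟨fun i j ↦ -v i j, fun i ↦ by rw [Finset.sum_neg_distrib, hsum], fun i j ↦ ?_, ?_⟩
  · simpa only [Int.natAbs_neg, ne_eq, neg_eq_zero] using hmem i j
  · simpa only [Int.natAbs_neg] using hinj

theorem union (h : HasSignedTuples k w σ S) (h' : HasSignedTuples l w σ S')
    (hd : Disjoint S S') : HasSignedTuples (k + l) w σ (S ∪ S') := by
  obtain ⟨v, hsum, hmem, hinj⟩ := h
  obtain ⟨v', hsum', hmem', hinj'⟩ := h'
  refine of_fintype (ι := Fin k ⊕ Fin l) (by simp) (Fintype.card_fin w) (Sum.elim v v')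
    (Sum.rec hsum hsum') ?_ ?_
  · rintro (i | i) j
    · exact ⟨(hmem i j).1, .inl (hmem i j).2⟩
    · exact ⟨(hmem' i j).1, .inr (hmem' i j).2⟩
  · rintro (i | i) (i' | i') j j' heq
    · exact (hinj heq).imp_left (congrArg _)
    · exact (hd.ne_of_mem (hmem i j).2 (hmem' i' j').2 heq).elim
    · exact (hd.ne_of_mem (hmem i' j').2 (hmem' i j).2 heq.symm).elim
    · exact (hinj' heq).imp_left (congrArg _)

theorem append (h : HasSignedTuples k w σ S) (h' : HasSignedTuples k w' σ' S')
    (hd : Disjoint S S') : HasSignedTuples k (w + w') (σ + σ') (S ∪ S') := by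
  obtain ⟨v, hsum, hmem, hinj⟩ := h
  obtain ⟨v', hsum', hmem', hinj'⟩ := h'
  refine of_fintype (κ := Fin w ⊕ Fin w') (Fintype.card_fin k) (by simp)
    (fun i ↦ Sum.elim (v i) (v' i)) (fun i ↦ by simp [hsum, hsum']) ?_ ?_
  · rintro i (j | j)
    · exact ⟨(hmem i j).1, .inl (hmem i j).2⟩
    · exact ⟨(hmem' i j).1, .inr (hmem' i j).2⟩
  · rintro i i' (j | j) (j' | j') heq
    · exact (hinj heq).imp_right (congrArg _)
    · exact (hd.ne_of_mem (hmem i j).2 (hmem' i' j').2 heq).elim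
    · exact (hd.ne_of_mem (hmem i' j').2 (hmem' i j).2 heq.symm).elim
    · exact (hinj' heq).imp_right (congrArg _)

theorem split (h : HasSignedTuples (k + l) w σ S) : ∃ S₁ S₂, Disjoint S₁ S₂ ∧ S₁ ∪ S₂ ⊆ S ∧
    HasSignedTuples k w σ S₁ ∧ HasSignedTuples l w σ S₂ := by
  obtain ⟨v, hsum, hmem, hinj⟩ := h
  refine ⟨{x | ∃ i j, (v (Fin.castAdd l i) j).natAbs = x},
    {x | ∃ i j, (v (Fin.natAdd k i) j).natAbs = x}, ?_, ?_,
    ⟨fun i ↦ v (Fin.castAdd l i), fun _ ↦ hsum _, fun i j ↦ ⟨(hmem _ _).1, i, j, rfl⟩,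
      fun _ _ _ _ h ↦ (hinj h).imp_left (Fin.castAdd_injective k l ·)⟩,
    ⟨fun i ↦ v (Fin.natAdd k i), fun _ ↦ hsum _, fun i j ↦ ⟨(hmem _ _).1, i, j, rfl⟩,
      fun _ _ _ _ h ↦ (hinj h).imp_left (Fin.natAdd_injective l k ·)⟩⟩
  · rw [Set.disjoint_left]
    rintro _ ⟨i, j, rfl⟩ ⟨i', j', heq⟩
    have := congrArg Fin.val (hinj heq).1
    simp only [Fin.val_natAdd, Fin.val_castAdd] at this
    omega
  · rintro _ (⟨i, j, rfl⟩ | ⟨i, j, rfl⟩) <;> exact (hmem _ _).2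

theorem quadruples (h : HasSignedTuples (2 * k) 2 σ S) : HasSignedTuples k 4 0 S := by
  rw [two_mul] at h
  obtain ⟨S₁, S₂, hd, hS, h₁, h₂⟩ := h.split
  simpa using (h₁.append h₂.neg hd).mono hS

theorem sextuple (h : HasSignedTuples 1 2 (2 * σ) S) (h' : HasSignedTuples 2 2 σ S')
    (hd : Disjoint S S') : HasSignedTuples 1 6 0 (S ∪ S') := by
  obtain ⟨S₁, S₂, hd', hS, h₁, h₂⟩ := split (k := 1) (l := 1) h'
  have := (h.append h₁.neg (hd.mono_right (Set.subset_union_left.trans hS))).append h₂.neg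
    ((hd.mono_right (Set.subset_union_right.trans hS)).union_left hd')
  rw [show 2 * σ + -σ + -σ = 0 by ring, Set.union_assoc] at this
  exact this.mono (Set.union_subset_union_right S hS)

end HasSignedTuples

theorem hasSignedTuples_pairs {d k s : ℕ} {S : Set ℕ} (hd : 0 < d) (hs : 0 < s)
    (hS : ∀ t < 2 * k, s + d * t ∈ S) : HasSignedTuples k 2 d S := by
  let v : Fin k → Fin 2 → ℤ := fun t ↦ ![-(s + d * (2 * t) : ℕ), (s + d * (1 + 2 * t) : ℕ)]
  have natAbs_v (t j) : (v t j).natAbs = s + d * (finProdFinEquiv (t, j) : ℕ) := by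
    fin_cases j
    · exact (Int.natAbs_neg _).trans ((Int.natAbs_natCast _).trans (by simp [finProdFinEquiv]))
    · exact (Int.natAbs_natCast _).trans (by simp [finProdFinEquiv])
  refine ⟨v, fun t ↦ ?_, fun t j ↦ ⟨fun h ↦ ?_, ?_⟩, fun t t' j j' heq ↦ ?_⟩
  · simp only [v, Fin.sum_univ_two, Matrix.cons_val_zero, Matrix.cons_val_one]
    push_cast
    ring
  · have := natAbs_v t j
    rw [h, Int.natAbs_zero] at this
    omega
  · rw [natAbs_v]
    exact hS _ (mul_comm k 2 ▸ Fin.is_lt _)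
  · simp only [natAbs_v, add_right_inj, mul_right_inj' hd.ne', Fin.val_inj,
      finProdFinEquiv.injective.eq_iff, Prod.mk.injEq] at heq
    exact heq

namespace HasZeroSumArray

variable {ι κ : Type*} [Fintype ι] [Fintype κ] {p p' q q' : ℕ} {S S' : Set ℕ}

theorem of_fintype (hι : Fintype.card ι = p) (hκ : Fintype.card κ = q) (a : ι → κ → ℤ)
    (hrow : ∀ i, ∑ j, a i j = 0) (hcol : ∀ j, ∑ i, a i j = 0) (hinj : Function.Injective2 a)
    (hmem : ∀ i j, (a i j).natAbs ∈ S) : HasZeroSumArray p q S := by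
  let e := (Fintype.equivFinOfCardEq hι).symm
  let f := (Fintype.equivFinOfCardEq hκ).symm
  exact ⟨fun i j ↦ a (e i) (f j), fun i ↦ (f.sum_comp (a (e i))).trans (hrow _),
    fun j ↦ (e.sum_comp (a · (f j))).trans (hcol _),
    fun _ _ _ _ h ↦ (hinj h).imp (e.injective ·) (f.injective ·), fun _ _ ↦ hmem _ _⟩

theorem mono (h : HasZeroSumArray p q S) (hS : S ⊆ S') : HasZeroSumArray p q S' := by
  obtain ⟨a, hrow, hcol, hinj, hmem⟩ := h
  exact ⟨a, hrow, hcol, hinj, fun i j ↦ hS (hmem i j)⟩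

theorem transpose (h : HasZeroSumArray p q S) : HasZeroSumArray q p S := by
  obtain ⟨a, hrow, hcol, hinj, hmem⟩ := h
  exact ⟨fun j i ↦ a i j, hcol, hrow, fun _ _ _ _ heq ↦ (hinj heq).symm, fun j i ↦ hmem i j⟩

theorem append (h : HasZeroSumArray p q S) (h' : HasZeroSumArray p q' S') (hd : Disjoint S S') :
    HasZeroSumArray p (q + q') (S ∪ S') := by
  obtain ⟨a, hrow, hcol, hinj, hmem⟩ := h
  obtain ⟨a', hrow', hcol', hinj', hmem'⟩ := h'
  have ne (i j i' j') : a i j ≠ a' i' j' :=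
    fun heq ↦ hd.ne_of_mem (hmem i j) (hmem' i' j') (congrArg Int.natAbs heq)
  refine of_fintype (κ := Fin q ⊕ Fin q') (Fintype.card_fin p) (by simp)
    (fun i ↦ Sum.elim (a i) (a' i)) (fun i ↦ by simp [hrow, hrow'])
    (Sum.rec hcol hcol') ?_ ?_
  · rintro i i' (j | j) (j' | j') heq
    · exact (hinj heq).imp_right (congrArg _)
    · exact (ne _ _ _ _ heq).elim
    · exact (ne _ _ _ _ heq.symm).elim
    · exact (hinj' heq).imp_right (congrArg _)
  · rintro i (j | j)
    · exact .inl (hmem i j)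
    · exact .inr (hmem' i j)

theorem stack (h : HasZeroSumArray p q S) (h' : HasZeroSumArray p' q S') (hd : Disjoint S S') :
    HasZeroSumArray (p + p') q (S ∪ S') :=
  (h.transpose.append h'.transpose hd).transpose

theorem double (h : HasZeroSumArray p q S) : HasZeroSumArray p q ((2 * ·) '' S) := by
  obtain ⟨a, hrow, hcol, hinj, hmem⟩ := h
  refine ⟨fun i j ↦ 2 * a i j, fun i ↦ ?_, fun j ↦ ?_, fun _ _ _ _ heq ↦ ?_, fun i j ↦ ?_⟩
  · rw [← Finset.mul_sum, hrow, mul_zero]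
  · rw [← Finset.mul_sum, hcol, mul_zero]
  · exact hinj (mul_left_cancel₀ two_ne_zero heq)
  · exact ⟨_, hmem i j, (Int.natAbs_mul 2 (a i j)).symm⟩

end HasZeroSumArray

theorem HasSignedTuples.block {k l w : ℕ} {S : Set ℕ} (h : HasSignedTuples (k * l) w 0 S) :
    HasZeroSumArray (k * w) (2 * l) S := by
  obtain ⟨v, hsum, hmem, hinj⟩ := h
  refine .of_fintype (ι := Fin k × Fin w) (κ := ℤˣ × Fin l) (by simp) (by simp)
    (fun x y ↦ y.1 * v (finProdFinEquiv (x.1, y.2)) x.2) (fun x ↦ ?_) (fun y ↦ ?_) ?_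
    (fun x y ↦ ?_)
  · simp [Fintype.sum_prod_type]
  · simp [Fintype.sum_prod_type, ← Finset.mul_sum, hsum]
  · rintro ⟨i, t⟩ ⟨i', t'⟩ ⟨u, j⟩ ⟨u', j'⟩ heq
    dsimp only at heq
    have habs := congrArg Int.natAbs heq
    simp only [Int.natAbs_mul, Int.units_natAbs, one_mul] at habs
    obtain ⟨hij, rfl⟩ := hinj habs
    obtain ⟨rfl, rfl⟩ := Prod.mk.inj (finProdFinEquiv.injective hij)
    rw [Units.ext (mul_right_cancel₀ (hmem _ _).1 heq)]
    exact ⟨rfl, rfl⟩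
  · rw [Int.natAbs_mul, Int.units_natAbs, one_mul]
    exact (hmem _ _).2

theorem hasZeroSumArray_of_quadruples {μ ν k : ℕ} {S : Set ℕ} (hk : 2 * k = μ * ν)
    (h : HasSignedTuples k 4 0 S) : HasZeroSumArray (2 * μ) (2 * ν) S := by
  rcases Nat.even_mul.1 (even_iff_exists_two_mul.2 ⟨k, hk.symm⟩) with hμ | hν
  · obtain ⟨α, rfl⟩ := hμ.two_dvd
    obtain rfl : k = α * ν := by linarith
    convert h.block using 1
    ring
  · obtain ⟨β, rfl⟩ := hν.two_dvd
    obtain rfl : k = β * μ := by linarith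
    convert h.block.transpose using 1
    ring

theorem hasZeroSumArray_of_sextuple_of_quadruples {μ ν k : ℕ} {S S' : Set ℕ} (hμ : 3 ≤ μ)
    (hk : 3 + 2 * k = μ * ν) (h' : HasSignedTuples 1 6 0 S') (h : HasSignedTuples k 4 0 S)
    (hd : Disjoint S' S) : HasZeroSumArray (2 * μ) (2 * ν) (S' ∪ S) := by
  have hodd : Odd (μ * ν) := ⟨k + 1, by omega⟩
  obtain ⟨⟨α, rfl⟩, ⟨β, rfl⟩⟩ : (∃ α, μ = 3 + 2 * α) ∧ ∃ β, ν = 2 * β + 1 := by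
    obtain ⟨⟨α, rfl⟩, hν⟩ := Nat.odd_mul.1 hodd
    exact ⟨⟨α - 1, by omega⟩, hν⟩
  obtain rfl : k = α * 1 + β * (3 + 2 * α) := by linarith
  -- The sextuple and `α` of the quadruples fill two columns; the number of the remaining
  -- columns is a multiple of `4`.
  obtain ⟨S₁, S₂, hd₁₂, hS, h₁, h₂⟩ := h.split
  obtain ⟨hS₁, hS₂⟩ := Set.union_subset_iff.1 hS
  have columns : HasZeroSumArray (2 * (3 + 2 * α)) 2 (S' ∪ S₁) := by
    convert (HasSignedTuples.block (k := 1) (l := 1) h').stack h₁.block (hd.mono_right hS₁) using 1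
    ring
  have array := columns.append h₂.block.transpose ((hd.mono_right hS₂).union_left hd₁₂)
  rw [Set.union_assoc] at array
  convert array.mono (Set.union_subset_union_right S' hS) using 1
  ring

theorem hasZeroSumArray_of_pairs {μ ν a k : ℕ} {A B Q : Set ℕ} (hμ : 3 ≤ μ)
    (hk : a + 2 + 2 * k = μ * ν) (hA : HasSignedTuples a 2 2 A) (hB : HasSignedTuples 2 2 1 B)
    (hQ : HasSignedTuples k 4 0 Q) (hAB : Disjoint A B) (hAQ : Disjoint A Q) (hBQ : Disjoint B Q) :
    HasZeroSumArray (2 * μ) (2 * ν) (A ∪ B ∪ Q) := by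
  obtain ⟨b, rfl | rfl⟩ := a.even_or_odd'
  · refine hasZeroSumArray_of_quadruples (k := b + 1 + k) (by linarith) ?_
    exact (hA.quadruples.union (HasSignedTuples.quadruples (k := 1) hB) hAB).union hQ
      (hAQ.union_left hBQ)
  · rw [add_comm] at hA
    obtain ⟨A₁, A₂, hd, hA₁₂, hA₁, hA₂⟩ := hA.split
    obtain ⟨hA₁A, hA₂A⟩ := Set.union_subset_iff.1 hA₁₂
    have sextuple := HasSignedTuples.sextuple (σ := 1) hA₁ hB (hAB.mono_left hA₁A)
    have quadruples := hA₂.quadruples.union hQ (hAQ.mono_left hA₂A)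
    refine (hasZeroSumArray_of_sextuple_of_quadruples hμ (by linarith) sextuple quadruples ?_).mono
      ?_
    · simp only [Set.disjoint_union_left, Set.disjoint_union_right]
      exact ⟨⟨hd, hAB.symm.mono_right hA₂A⟩, hAQ.mono_left hA₁A, hBQ⟩
    · grind

theorem HasZeroSumArray.border {μ ν : ℕ} {C S₁ S₂ : Set ℕ} (hC : HasZeroSumArray 3 3 C)
    (hT : HasSignedTuples (μ + ν) 3 0 S₁) (hE : HasZeroSumArray (2 * μ) (2 * ν) S₂)
    (hC₁ : Disjoint C S₁) (hC₂ : Disjoint C S₂) (h₁₂ : Disjoint S₁ S₂) :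
    HasZeroSumArray (2 * μ + 3) (2 * ν + 3) (C ∪ S₁ ∪ S₂) := by
  obtain ⟨U, W, hUW, hS, hU, hW⟩ := hT.split
  obtain ⟨hUS, hWS⟩ := Set.union_subset_iff.1 hS
  have columns : HasZeroSumArray (2 * μ) 3 U := by
    simpa using (HasSignedTuples.block (k := 1) (by simpa using hU)).transpose
  have rows : HasZeroSumArray 3 (2 * ν) W := by
    simpa using HasSignedTuples.block (k := 1) (by simpa using hW)
  refine ((hE.append columns (h₁₂.symm.mono_right hUS)).stack
    (rows.append hC (hC₁.symm.mono_left hWS)) ?_).mono ?_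
  · simp only [Set.disjoint_union_left, Set.disjoint_union_right]
    exact ⟨⟨h₁₂.symm.mono_right hWS, hUW⟩, hC₂.symm, hC₁.symm.mono_left hUS⟩
  · grind

theorem hasZeroSumArray_even {μ ν : ℕ} (hμ : 3 ≤ μ) (hν : 1 ≤ ν) :
    HasZeroSumArray (2 * μ) (2 * ν) {x | x < 4 * (μ * ν) ∧ Odd x} := by
  have hμν : 3 ≤ μ * ν := by nlinarith
  obtain ⟨D, hD⟩ : ∃ D, D = μ * ν := ⟨_, rfl⟩
  rw [← hD] at hμν ⊢
  obtain ⟨k, rfl | rfl⟩ := D.even_or_odd'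
  · exact hasZeroSumArray_of_quadruples hD <| .quadruples <|
      hasSignedTuples_pairs two_pos one_pos fun t _ ↦ ⟨by omega, t, by omega⟩
  · have sextuple : HasSignedTuples 1 6 0 {1, 3, 5, 7, 9, 11} :=
      ⟨fun _ ↦ ![11, 7, -1, -3, -5, -9], by decide, by simp [Fin.forall_fin_succ],
        by unfold Function.Injective2; decide⟩
    have quadruples : HasSignedTuples (k - 1) 4 0 {x | 13 ≤ x ∧ x < 4 * (2 * k + 1) ∧ Odd x} :=
      .quadruples <| hasSignedTuples_pairs (s := 13) two_pos (by simp) fun t _ ↦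
        ⟨by omega, by omega, t + 6, by omega⟩
    refine (hasZeroSumArray_of_sextuple_of_quadruples hμ (by omega) sextuple quadruples ?_).mono ?_
    · rw [Set.disjoint_left]; simp
    · rintro x ((rfl | rfl | rfl | rfl | rfl | rfl) | ⟨-, h⟩)
      on_goal 7 => exact h
      all_goals exact ⟨by omega, by decide⟩

theorem hasSignedTuples_pair {d s : ℕ} (hd : 0 < d) (hs : 0 < s) :
    HasSignedTuples 1 2 d {s, s + d} :=
  hasSignedTuples_pairs hd hs fun t ht ↦ by interval_cases t <;> simp

theorem hasSignedTuples_two_pairs {d s t : ℕ} (hd : 0 < d) (hs : 0 < s) (hst : s + d < t) :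
    HasSignedTuples 2 2 d ({s, s + d} ∪ {t, t + d}) :=
  (hasSignedTuples_pair hd hs).union (hasSignedTuples_pair hd (by omega)) <| by
    simp only [Set.disjoint_left, Set.mem_insert_iff, Set.mem_singleton_iff]
    omega

theorem hasSignedTuples_quadruples {k s : ℕ} (hs : 0 < s) :
    HasSignedTuples k 4 0 {x | s ≤ x ∧ x < s + 4 * k} :=
  .quadruples <| hasSignedTuples_pairs one_pos hs fun t _ ↦ ⟨by omega, by omega⟩

theorem hasSignedTuples_triples {b c T : ℕ} (hb : 0 < b) (hc : b + 3 * T < c + 3) :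
    HasSignedTuples T 3 0 {x | b ≤ x ∧ x < b + 2 * T ∧ x % 2 = b % 2 ∨ c < x + T ∧ x ≤ c ∨
      b + c ≤ x ∧ x < b + c + T} := by
  refine ⟨fun i ↦ ![b + 2 * i, c - i, -(b + c + i)], fun i ↦ ?_, fun i j ↦ ?_,
    fun i i' j j' heq ↦ ?_⟩
  · simp only [Fin.sum_univ_three, Matrix.cons_val]
    ring
  · fin_cases j <;> simp <;> omega
  · fin_cases j <;> fin_cases j' <;> simp [Fin.ext_iff] at heq ⊢ <;> omega

theorem hasZeroSumArray_three_three {y : ℕ} (hy : 2 ≤ y) :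
    HasZeroSumArray 3 3 {0, 1, y, y + 1, y + 2} := by
  refine ⟨![![1, y, -1 - y], ![-2 - y, 0, 2 + y], ![1 + y, -y, -1]], fun i ↦ ?_, fun j ↦ ?_,
    fun i i' j j' heq ↦ ?_, fun i j ↦ ?_⟩
  · fin_cases i <;> simp [Fin.sum_univ_three]
  · fin_cases j <;> simp [Fin.sum_univ_three]
    ring
  · fin_cases i <;> fin_cases i' <;> fin_cases j <;> fin_cases j' <;> simp at heq ⊢ <;> omega
  · fin_cases i <;> fin_cases j <;> simp <;> omega

-- The absolute values `0, …, N` are distributed as follows. The core takes `0, 1, s, s + 1, s + 2`,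
-- the `T = μ + ν` border triples take `3, 5, …, 2 * T + 1`, the interval `(c - T, c]` and the last
-- `T` numbers. This leaves `2, 4, …, 4 * P`, which form pairs at distance `2`, the interval from
-- `s + 3` to `c - T`, and `c + 1, c + 2`.
theorem hasZeroSumArray_odd_of_even_sub {μ ν P k : ℕ} (hμ : 3 ≤ μ) (hP : μ + ν ≤ 2 * P)
    (hP' : 2 * P ≤ μ + ν + 1) (hk : P + 2 + 2 * k = μ * ν) :
    HasZeroSumArray (2 * μ + 3) (2 * ν + 3) {x | 2 * x < (2 * μ + 3) * (2 * ν + 3)} := by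
  have hcard : (2 * μ + 3) * (2 * ν + 3) = 4 * (μ * ν) + 6 * (μ + ν) + 9 := by ring
  obtain ⟨s, hs⟩ : ∃ s, s = μ + ν + 2 * P + 2 := ⟨_, rfl⟩
  obtain ⟨c, hc⟩ : ∃ c, c = s + (μ + ν) + 4 * k + 4 := ⟨_, rfl⟩
  have core := hasZeroSumArray_three_three (y := s) (by omega)
  have triples := hasSignedTuples_triples (b := 3) (c := c) (T := μ + ν) three_pos (by omega)
  have pairs₂ : HasSignedTuples P 2 2 {x | x % 2 = 0 ∧ 2 ≤ x ∧ x ≤ 4 * P} :=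
    hasSignedTuples_pairs (d := 2) two_pos two_pos fun t _ ↦ ⟨by omega, by omega, by omega⟩
  have pairs₁ := hasSignedTuples_two_pairs (s := s + 4 * k + 3) (t := c + 1) one_pos (by omega)
    (by omega)
  have quadruples := hasSignedTuples_quadruples (k := k) (s := s + 3) (by omega)
  refine (core.border triples
    (hasZeroSumArray_of_pairs hμ hk pairs₂ pairs₁ quadruples ?_ ?_ ?_) ?_ ?_ ?_).mono ?_
  all_goals
    simp only [Set.disjoint_left, Set.subset_def, Set.mem_union, Set.mem_insert_iff,
      Set.mem_singleton_iff, Set.mem_ofPred_eq]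
    omega

-- The number of quadruples has the other parity now. To correct this, `s` is moved out of the core,
-- and the pairs `{2, 8}` and `{s, s + 6}` at distance `6` form a quadruple.
theorem hasZeroSumArray_odd_of_odd_sub {μ ν P k : ℕ} (hμ : 3 ≤ μ) (hP₂ : 2 ≤ P)
    (hP : μ + ν ≤ 2 * P) (hP' : 2 * P ≤ μ + ν + 1) (hk : P + 3 + 2 * k = μ * ν) :
    HasZeroSumArray (2 * μ + 3) (2 * ν + 3) {x | 2 * x < (2 * μ + 3) * (2 * ν + 3)} := by
  have hcard : (2 * μ + 3) * (2 * ν + 3) = 4 * (μ * ν) + 6 * (μ + ν) + 9 := by ring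
  obtain ⟨s, hs⟩ : ∃ s, s = μ + ν + 2 * P + 2 := ⟨_, rfl⟩
  obtain ⟨c, hc⟩ : ∃ c, c = s + (μ + ν) + 4 * k + 6 := ⟨_, rfl⟩
  have core := hasZeroSumArray_three_three (y := s + 1) (by omega)
  have triples := hasSignedTuples_triples (b := 3) (c := c) (T := μ + ν) three_pos (by omega)
  have pairs₂ : HasSignedTuples (1 + (P - 2)) 2 2
      ({4, 6} ∪ {x | x % 2 = 0 ∧ 10 ≤ x ∧ x ≤ 4 * P}) := by
    refine (hasSignedTuples_pair (d := 2) two_pos four_pos).union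
      (hasSignedTuples_pairs (d := 2) (s := 10) two_pos (by omega) fun t _ ↦
        ⟨by omega, by omega, by omega⟩) ?_
    simp [Set.disjoint_left]
  have pairs₁ := hasSignedTuples_two_pairs (s := s + 4) (t := c + 1) one_pos (by omega) (by omega)
  have quadruple : HasSignedTuples 1 4 0 ({2, 8} ∪ {s, s + 6}) :=
    (hasSignedTuples_two_pairs (d := 6) (s := 2) (t := s) (by omega) two_pos (by omega)).quadruples
  have quadruples := quadruple.union
    (hasSignedTuples_quadruples (k := k) (s := s + 7) (by omega)) (by
      simp only [Set.disjoint_left, Set.mem_union, Set.mem_insert_iff, Set.mem_singleton_iff,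
        Set.mem_ofPred_eq]
      omega)
  refine (core.border triples
    (hasZeroSumArray_of_pairs hμ (by omega) pairs₂ pairs₁ quadruples ?_ ?_ ?_) ?_ ?_ ?_).mono ?_
  all_goals
    simp only [Set.disjoint_left, Set.subset_def, Set.mem_union, Set.mem_insert_iff,
      Set.mem_singleton_iff, Set.mem_ofPred_eq]
    omega

theorem hasZeroSumArray_odd {μ ν : ℕ} (hμ : 5 ≤ μ) (hν : 1 ≤ ν) :
    HasZeroSumArray (2 * μ + 3) (2 * ν + 3) {x | 2 * x < (2 * μ + 3) * (2 * ν + 3)} := by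
  obtain ⟨P, hP, hP'⟩ : ∃ P, μ + ν ≤ 2 * P ∧ 2 * P ≤ μ + ν + 1 :=
    ⟨(μ + ν + 1) / 2, by omega, by omega⟩
  have hD : μ + ν + 4 ≤ 2 * (μ * ν) := by nlinarith
  obtain ⟨k, hk | hk⟩ := (μ * ν - (P + 2)).even_or_odd'
  · exact hasZeroSumArray_odd_of_even_sub (k := k) (by omega) hP hP' (by omega)
  · exact hasZeroSumArray_odd_of_odd_sub (k := k) (by omega) (by omega) hP hP' (by omega)

theorem hasZeroSumArray_of_sq_le {m n : ℕ} (hn : 4 ≤ n) (hpar : m % 2 = n % 2)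
    (hbig : n ^ 2 ≤ 2 * m) : HasZeroSumArray m n {x | x < m * n ∧ Odd (x + m * n)} := by
  have hm : 2 * n ≤ m := by nlinarith
  obtain ⟨ν, rfl | rfl⟩ := n.even_or_odd'
  · obtain ⟨μ, rfl⟩ : ∃ μ, m = 2 * μ := ⟨m / 2, by omega⟩
    refine (hasZeroSumArray_even (μ := μ) (ν := ν) (by omega) (by omega)).mono ?_
    rw [show 2 * μ * (2 * ν) = 4 * (μ * ν) by ring]
    rintro x ⟨hx, h⟩
    exact ⟨hx, h.add_even ⟨2 * (μ * ν), by ring⟩⟩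
  · obtain ⟨μ, rfl⟩ : ∃ μ, m = 2 * μ + 3 := ⟨(m - 3) / 2, by omega⟩
    obtain ⟨ν, rfl⟩ : ∃ ν', ν = ν' + 1 := ⟨ν - 1, by omega⟩
    have hμ : 5 ≤ μ := by nlinarith [Nat.pow_le_pow_left (show 5 ≤ 2 * (ν + 1) + 1 by omega) 2]
    rw [show 2 * (ν + 1) + 1 = 2 * ν + 3 by ring]
    have hodd : Odd ((2 * μ + 3) * (2 * ν + 3)) := by simp [parity_simps]
    refine (hasZeroSumArray_odd hμ (by omega)).double.mono ?_
    rintro _ ⟨x, hx, rfl⟩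
    exact ⟨hx, (even_two_mul x).add_odd hodd⟩

/-- A magic rectangle: its entries are the numbers `1, …, card ι * card κ`, each used once, and all
row sums and all column sums agree. Since the total is known, so are these sums; they are stated
doubled to avoid the division by `2`. -/
structure IsMagicRectangle {ι κ : Type*} [Fintype ι] [Fintype κ] (a : ι → κ → ℕ) : Prop where
  bijOn : Set.BijOn (Function.uncurry a) Set.univ
    (Set.Icc 1 (Fintype.card ι * Fintype.card κ))
  two_mul_row_sum (i : ι) :
    2 * ∑ j, a i j = Fintype.card κ * (Fintype.card ι * Fintype.card κ + 1)
  two_mul_col_sum (j : κ) :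
    2 * ∑ i, a i j = Fintype.card ι * (Fintype.card ι * Fintype.card κ + 1)

theorem bijOn_univ_Icc_one_of_injective {α : Type*} {g : α → ℕ}
    (hinj : Function.Injective g) (hmem : ∀ x, g x ∈ Set.Icc 1 (Nat.card α)) :
    Set.BijOn g Set.univ (Set.Icc 1 (Nat.card α)) := by
  have himage : g '' Set.univ = Set.Icc 1 (Nat.card α) :=
    Set.eq_of_subset_of_ncard_le (Set.image_subset_iff.2 fun x _ ↦ hmem x)
      (by rw [hinj.injOn.ncard_image, Set.ncard_univ, Set.ncard_Icc_nat, add_tsub_cancel_right])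
  exact himage ▸ hinj.injOn.bijOn_image

theorem HasZeroSumArray.exists_isMagicRectangle {ι κ : Type*} [Fintype ι] [Fintype κ] {p q : ℕ}
    (hι : Fintype.card ι = p) (hκ : Fintype.card κ = q)
    (h : HasZeroSumArray p q {x | x < p * q ∧ Odd (x + p * q)}) :
    ∃ a : ι → κ → ℕ, IsMagicRectangle a := by
  subst hι hκ
  obtain ⟨a, hrow, hcol, hinj, hmem⟩ := h
  obtain ⟨N, hN⟩ : ∃ N, Fintype.card ι * Fintype.card κ = N := ⟨_, rfl⟩
  simp only [hN, Set.mem_ofPred_eq, Nat.odd_iff] at hmem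
  let e := Fintype.equivFin ι
  let f := Fintype.equivFin κ
  let b : ι → κ → ℕ := fun i j ↦ ((a (e i) (f j) + N + 1) / 2).toNat
  have two_mul_b (i j) : 2 * (b i j : ℤ) = a (e i) (f j) + (N + 1) := by
    have := hmem (e i) (f j)
    simp only [b]
    omega
  have b_mem (i j) : b i j ∈ Set.Icc 1 N := by
    have h₁ := hmem (e i) (f j)
    have h₂ := two_mul_b i j
    rw [Set.mem_Icc]
    omega
  have uncurry_injective : Function.Injective (Function.uncurry b) := by
    rintro ⟨i, j⟩ ⟨i', j'⟩ (heq : b i j = b i' j')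
    have h₁ := two_mul_b i j
    rw [heq, two_mul_b, add_left_inj] at h₁
    obtain ⟨hi, hj⟩ := hinj h₁
    rw [e.injective hi, f.injective hj]
  refine ⟨b, ?_, fun i ↦ ?_, fun j ↦ ?_⟩
  · have hcard : Nat.card (ι × κ) = N := by simp [hN]
    rw [hN, ← hcard]
    exact bijOn_univ_Icc_one_of_injective uncurry_injective fun x ↦ hcard ▸ b_mem x.1 x.2
  · zify
    rw [Finset.mul_sum, Finset.sum_congr rfl fun j _ ↦ two_mul_b i j, Finset.sum_add_distrib,
      f.sum_comp (a (e i)), hrow]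
    simp [← hN]
  · zify
    rw [Finset.mul_sum, Finset.sum_congr rfl fun i _ ↦ two_mul_b i j, Finset.sum_add_distrib,
      e.sum_comp (a · (f j)), hcol]
    simp [← hN]

theorem exists_isMagicRectangle_of_sq_le {ι κ : Type*} [Fintype ι] [Fintype κ]
    (hκ : 4 ≤ Fintype.card κ) (hpar : Fintype.card ι % 2 = Fintype.card κ % 2)
    (hbig : Fintype.card κ ^ 2 ≤ 2 * Fintype.card ι) :
    ∃ a : ι → κ → ℕ, IsMagicRectangle a :=
  (hasZeroSumArray_of_sq_le hκ hpar hbig).exists_isMagicRectangle rfl rfl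

section Labelings

variable {V : Type*} {G : SimpleGraph V} {f : Sym2 V → ℕ}

theorem vertexSum_eq_sum_neighborFinset (G : SimpleGraph V) (f : Sym2 V → ℕ) (v : V)
    [Fintype (G.neighborSet v)] : vertexSum G f v = ∑ w ∈ G.neighborFinset v, f s(v, w) := by
  have hincidence : G.incidenceSet v = (s(v, ·)) '' G.neighborSet v := by
    ext x
    refine ⟨?_, by rintro ⟨w, hw, rfl⟩; exact (G.mem_incidenceSet v w).2 hw⟩
    rintro ⟨hx, w, rfl⟩
    exact ⟨w, hx, rfl⟩
  rw [vertexSum, hincidence, finsum_mem_image fun _ _ _ _ ↦ Sym2.congr_right.1,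
    ← G.coe_neighborFinset, finsum_mem_coe_finset]

theorem sum_add_choose_two_le {α : Type*} {s : Finset α} {g : α → ℕ} {N : ℕ}
    (hinj : Set.InjOn g s) (hle : ∀ x ∈ s, g x ≤ N) :
    ∑ x ∈ s, g x + s.card.choose 2 ≤ s.card * N := by
  have hinj' : Set.InjOn (fun x ↦ (g x : ℤ)) s := Nat.cast_injective.comp_injOn hinj
  have hgauss : ∑ i ∈ Finset.range s.card, (i : ℤ) = s.card.choose 2 := by
    rw [Nat.choose_two_right, ← Finset.sum_range_id, Nat.cast_sum]
  have hsum := Finset.sum_le_sum_range (s := s.image fun x ↦ (g x : ℤ)) (c := N) (by simpa)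
  rw [Finset.sum_image hinj', Finset.card_image_of_injOn hinj', Finset.sum_sub_distrib,
    hgauss, Finset.sum_const, Finset.card_range, nsmul_eq_mul] at hsum
  zify
  linarith

theorem vertexSum_add_choose_two_le {v : V} {N : ℕ} [Fintype (G.neighborSet v)]
    (hinj : Set.InjOn f (G.incidenceSet v)) (hle : ∀ x ∈ G.incidenceSet v, f x ≤ N) :
    vertexSum G f v + (G.degree v).choose 2 ≤ G.degree v * N := by
  have mem {w : V} (hw : w ∈ G.neighborFinset v) : s(v, w) ∈ G.incidenceSet v := by
    simpa using hw
  rw [vertexSum_eq_sum_neighborFinset]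
  exact sum_add_choose_two_le
    (fun _ hw _ hw' heq ↦ Sym2.congr_right.1 (hinj (mem hw) (mem hw') heq))
    fun w hw ↦ hle _ (mem hw)

theorem chiLA_le_colorCount (hf : IsLocalAntimagic G f) : chiLA G ≤ colorCount G f :=
  Nat.sInf_le ⟨f, hf, rfl⟩

theorem IsLocalAntimagic.exists_colorCount_eq_chiLA (hf : IsLocalAntimagic G f) :
    ∃ g, IsLocalAntimagic G g ∧ colorCount G g = chiLA G :=
  Nat.sInf_mem (s := {k | ∃ g, IsLocalAntimagic G g ∧ colorCount G g = k}) ⟨_, f, hf, rfl⟩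

theorem exists_isLocalAntimagic_of_chiLA_ne_zero (h : chiLA G ≠ 0) :
    ∃ g, IsLocalAntimagic G g := by
  obtain ⟨_, g, hg, -⟩ := Nat.nonempty_of_pos_sInf (Nat.pos_of_ne_zero h)
  exact ⟨g, hg⟩

theorem IsLocalAntimagic.chromaticNumber_le_colorCount [Finite V] (hf : IsLocalAntimagic G f) :
    G.chromaticNumber ≤ colorCount G f := by
  have := Fintype.ofFinite (Set.range (vertexSum G f))
  let C : G.Coloring (Set.range (vertexSum G f)) :=
    SimpleGraph.Coloring.mk (fun v ↦ ⟨vertexSum G f v, v, rfl⟩)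
      fun huv heq ↦ hf.2 _ _ huv (congrArg Subtype.val heq)
  rw [colorCount, ← Nat.card_coe_set_eq, Nat.card_eq_fintype_card]
  exact C.colorable.chromaticNumber_le

theorem IsLocalAntimagic.chromaticNumber_le_chiLA [Finite V] (hf : IsLocalAntimagic G f) :
    G.chromaticNumber ≤ chiLA G := by
  obtain ⟨g, hg, hcount⟩ := hf.exists_colorCount_eq_chiLA
  exact hcount ▸ hg.chromaticNumber_le_colorCount

end Labelings

section Join

variable {V : Type*} {G : SimpleGraph V} {n : ℕ}

@[simp]
theorem joinEmpty_adj_inl_inl {u v : V} :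
    (joinEmpty G n).Adj (Sum.inl u) (Sum.inl v) ↔ G.Adj u v := by
  simp only [joinEmpty, SimpleGraph.fromRel_adj, ne_eq, Sum.inl.injEq, Sum.isRight_inl]
  grind [SimpleGraph.Adj.symm, SimpleGraph.Adj.ne]

@[simp]
theorem joinEmpty_adj_inl_inr {u : V} {j : Fin n} :
    (joinEmpty G n).Adj (Sum.inl u) (Sum.inr j) := by
  simp [joinEmpty]

@[simp]
theorem joinEmpty_adj_inr_inl {u : V} {j : Fin n} :
    (joinEmpty G n).Adj (Sum.inr j) (Sum.inl u) :=
  joinEmpty_adj_inl_inr.symm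

@[simp]
theorem not_joinEmpty_adj_inr_inr {i j : Fin n} :
    ¬(joinEmpty G n).Adj (Sum.inr i) (Sum.inr j) := by
  simp [joinEmpty]

theorem edgeSet_joinEmpty : (joinEmpty G n).edgeSet =
    Sym2.map Sum.inl '' G.edgeSet ∪
      (fun x : V × Fin n ↦ s(Sum.inl x.1, Sum.inr x.2)) '' Set.univ := by
  refine Set.Subset.antisymm (fun x ↦ ?_) (Set.union_subset ?_ ?_)
  · induction x with | _ x y
    intro hx
    rw [SimpleGraph.mem_edgeSet] at hx
    rcases x with u | i <;> rcases y with v | j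
    · exact .inl ⟨s(u, v), joinEmpty_adj_inl_inl.1 hx, rfl⟩
    · exact .inr ⟨(u, j), trivial, rfl⟩
    · exact .inr ⟨(v, i), trivial, Sym2.eq_swap⟩
    · exact (not_joinEmpty_adj_inr_inr hx).elim
  · rintro _ ⟨x, hx, rfl⟩
    induction x with | _ u v
    exact joinEmpty_adj_inl_inl.2 hx
  · rintro _ ⟨x, -, rfl⟩
    exact joinEmpty_adj_inl_inr

theorem chromaticNumber_add_one_le_joinEmpty (hn : 0 < n) :
    G.chromaticNumber + 1 ≤ (joinEmpty G n).chromaticNumber := by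
  refine le_iInf₂ fun k (hk : (joinEmpty G n).Colorable k) ↦ ?_
  obtain ⟨C⟩ := hk
  let c := C (Sum.inr ⟨0, hn⟩)
  let D : G.Coloring {c' // c' ≠ c} :=
    SimpleGraph.Coloring.mk (fun u ↦ ⟨C (Sum.inl u), C.valid joinEmpty_adj_inl_inr⟩)
      fun huv heq ↦ C.valid (joinEmpty_adj_inl_inl.2 huv) (congrArg Subtype.val heq)
  have hcard : Fintype.card {c' // c' ≠ c} + 1 = k := by
    simpa [Fintype.card_subtype_compl] using Nat.sub_add_cancel c.pos
  calc
    G.chromaticNumber + 1 ≤ Fintype.card {c' // c' ≠ c} + 1 := by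
      gcongr
      exact D.colorable.chromaticNumber_le
    _ = k := mod_cast hcard

/-- The labeling of `G ∨ Oₙ` which is `f` on `G` and puts `c u j` on the edge from `u` to the
`j`-th new vertex. Its value on the non-edges between new vertices is irrelevant. -/
def joinLabeling (f : Sym2 V → ℕ) (c : V → Fin n → ℕ) : Sym2 (V ⊕ Fin n) → ℕ :=
  Sym2.lift ⟨fun
    | .inl u, .inl v => f s(u, v)
    | .inl u, .inr j | .inr j, .inl u => c u j
    | .inr _, .inr _ => 0, by
      rintro (u | i) (v | j)
      exacts [congrArg f Sym2.eq_swap, rfl, rfl, rfl]⟩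

variable {f : Sym2 V → ℕ} {c : V → Fin n → ℕ}

theorem vertexSum_joinLabeling_inl [Finite V] (u : V) :
    vertexSum (joinEmpty G n) (joinLabeling f c) (Sum.inl u) =
      vertexSum G f u + ∑ j, c u j := by
  classical
  have := Fintype.ofFinite V
  have hneighbors : (joinEmpty G n).neighborFinset (Sum.inl u) =
      (G.neighborFinset u).disjSum Finset.univ := by
    ext (v | j) <;> simp
  rw [vertexSum_eq_sum_neighborFinset, vertexSum_eq_sum_neighborFinset, hneighbors,
    Finset.sum_disjSum]
  rfl

theorem vertexSum_joinLabeling_inr [Fintype V] (j : Fin n) :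
    vertexSum (joinEmpty G n) (joinLabeling f c) (Sum.inr j) = ∑ u, c u j := by
  classical
  have hneighbors : (joinEmpty G n).neighborFinset (Sum.inr j) =
      (Finset.univ : Finset V).disjSum ∅ := by
    ext (v | j) <;> simp
  rw [vertexSum_eq_sum_neighborFinset, hneighbors, Finset.sum_disjSum, Finset.sum_empty, add_zero]
  rfl

theorem bijOn_joinLabeling {A B : Set ℕ} (hf : Set.BijOn f G.edgeSet A)
    (hc : Set.BijOn (Function.uncurry c) Set.univ B) (hAB : Disjoint A B) :
    Set.BijOn (joinLabeling f c) (joinEmpty G n).edgeSet (A ∪ B) := by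
  have inl_comp : joinLabeling f c ∘ Sym2.map Sum.inl = f := funext <| Sym2.ind fun _ _ ↦ rfl
  have hA : Set.BijOn (joinLabeling f c) (Sym2.map Sum.inl '' G.edgeSet) A := by
    rwa [← Set.bijOn_comp_iff (Sym2.map.injective Sum.inl_injective).injOn, inl_comp]
  have hB : Set.BijOn (joinLabeling f c)
      ((fun x : V × Fin n ↦ s(Sum.inl x.1, Sum.inr x.2)) '' Set.univ) B := by
    rwa [← Set.bijOn_comp_iff fun x _ y _ ↦ by simp [Prod.ext_iff]]
  have hne : ∀ x ∈ Sym2.map Sum.inl '' G.edgeSet,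
      ∀ y ∈ (fun x : V × Fin n ↦ s(Sum.inl x.1, Sum.inr x.2)) '' Set.univ,
      joinLabeling f c x ≠ joinLabeling f c y := fun x hx y hy ↦
    hAB.ne_of_mem (hA.mapsTo hx) (hB.mapsTo hy)
  rw [edgeSet_joinEmpty]
  exact hA.union hB <| (Set.injOn_union <| Set.disjoint_left.2 fun x hx hx' ↦ hne x hx x hx' rfl).2
    ⟨hA.injOn, hB.injOn, hne⟩

theorem IsLocalAntimagic.joinLabeling [Fintype V] (hf : IsLocalAntimagic G f)
    (hc : Set.BijOn (Function.uncurry c) Set.univ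
      (Set.Ioc G.edgeSet.ncard (G.edgeSet.ncard + Fintype.card V * n))) {R : ℕ}
    (hR : ∀ u, ∑ j, c u j = R) (hne : ∀ u j, vertexSum G f u + R ≠ ∑ v, c v j) :
    IsLocalAntimagic (joinEmpty G n) (joinLabeling f c) := by
  have hunion : Set.Icc 1 G.edgeSet.ncard ∪
      Set.Ioc G.edgeSet.ncard (G.edgeSet.ncard + Fintype.card V * n) =
      Set.Icc 1 (G.edgeSet.ncard + Fintype.card V * n) := by
    ext k
    simp only [Set.mem_union, Set.mem_Icc, Set.mem_Ioc]
    omega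
  have hbij := bijOn_joinLabeling hf.1 hc <| Set.disjoint_left.2 fun k hk hk' ↦
    hk'.1.not_ge hk.2
  rw [hunion] at hbij
  have hncard := hbij.ncard_eq
  rw [Set.ncard_Icc_nat, add_tsub_cancel_right] at hncard
  refine ⟨hncard ▸ hbij, ?_⟩
  rintro (u | i) (v | j) hadj
  · simpa only [vertexSum_joinLabeling_inl, hR, ne_eq, add_left_inj] using
      hf.2 u v (joinEmpty_adj_inl_inl.1 hadj)
  · simpa only [vertexSum_joinLabeling_inl, vertexSum_joinLabeling_inr, hR] using hne u j
  · simpa only [vertexSum_joinLabeling_inl, vertexSum_joinLabeling_inr, hR] using (hne v i).symm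
  · exact (not_joinEmpty_adj_inr_inr hadj).elim

theorem colorCount_joinLabeling_le [Fintype V] {R C : ℕ} (hR : ∀ u, ∑ j, c u j = R)
    (hC : ∀ j, ∑ u, c u j = C) :
    colorCount (joinEmpty G n) (joinLabeling f c) ≤ colorCount G f + 1 := by
  have hfin : (Set.range (vertexSum G f)).Finite := Set.finite_range _
  have hsub : Set.range (vertexSum (joinEmpty G n) (joinLabeling f c)) ⊆
      insert C ((· + R) '' Set.range (vertexSum G f)) := by
    rintro _ ⟨u | j, rfl⟩
    · rw [vertexSum_joinLabeling_inl, hR]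
      exact .inr ⟨_, ⟨u, rfl⟩, rfl⟩
    · rw [vertexSum_joinLabeling_inr, hC]
      exact .inl rfl
  calc
    _ ≤ (insert C ((· + R) '' Set.range (vertexSum G f))).ncard :=
      Set.ncard_le_ncard hsub ((hfin.image _).insert _)
    _ ≤ ((· + R) '' Set.range (vertexSum G f)).ncard + 1 := Set.ncard_insert_le _ _
    _ ≤ colorCount G f + 1 := Nat.add_le_add_right (Set.ncard_image_le hfin) 1

end Join

-- The left side is at most `2 * (d + n - m) * e - d * (d - 1)`. If `m ≤ d + n`, this is largest for
-- `2 * e = m * (m - 1)` and `d = m - 1`, that is, for a complete graph.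
theorem two_mul_add_lt_of_sq_le {m n d e x : ℤ} (hn : 4 ≤ n) (hbig : n ^ 2 ≤ 2 * m) (hd₀ : 0 ≤ d)
    (hd : d < m) (he₀ : 0 ≤ e) (he : 2 * e ≤ m * (m - 1))
    (hx : 2 * x + d * (d - 1) ≤ 2 * (d * e)) :
    2 * (x + (n - m) * e) < (m - n) * (m * n + 1) := by
  have hmn : 2 * n ≤ m := by nlinarith
  have hupper : 2 * (x + (n - m) * e) ≤ (d + n - m) * (2 * e) - d * (d - 1) := by linarith
  rcases le_total (d + n) m with hdn | hdn
  · have hd_sq : 0 ≤ d * (d - 1) := by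
      rcases hd₀.eq_or_lt with rfl | hd₁
      · simp
      · exact mul_nonneg hd₀ (by omega)
    calc
      2 * (x + (n - m) * e) ≤ (d + n - m) * (2 * e) - d * (d - 1) := hupper
      _ ≤ 0 := by nlinarith
      _ < (m - n) * (m * n + 1) := by
        have : 0 ≤ m * n := by nlinarith
        exact mul_pos (by omega) (by omega)
  · have hmono : 0 ≤ (m - 1 - d) * (m * (m - 1) - (m - 2 + d)) :=
      mul_nonneg (by omega) (by nlinarith)
    have hcomplete : 0 < m * (2 * m - n ^ 2) + (m * (n - 3) - (n - 2)) := by nlinarith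
    calc
      2 * (x + (n - m) * e) ≤ (d + n - m) * (2 * e) - d * (d - 1) := hupper
      _ ≤ (d + n - m) * (m * (m - 1)) - d * (d - 1) := by gcongr
      _ ≤ (n - 1) * (m * (m - 1)) - (m - 1) * (m - 2) := by linarith
      _ < (m - n) * (m * n + 1) := by linarith

namespace IsMagicRectangle

section

variable {ι κ : Type*} [Fintype ι] [Fintype κ] {a : ι → κ → ℕ}

theorem bijOn_add (ha : IsMagicRectangle a) (k : ℕ) :
    Set.BijOn (Function.uncurry fun i j ↦ k + a i j) Set.univ
      (Set.Ioc k (k + Fintype.card ι * Fintype.card κ)) := by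
  have himage := congrArg ((k + ·) '' ·) ha.bijOn.image_eq
  have hinj : Set.InjOn (Function.uncurry fun i j ↦ k + a i j) Set.univ :=
    (add_right_injective k).comp_injOn ha.bijOn.injOn
  simp only [Set.image_image, Set.image_const_add_Icc] at himage
  convert hinj.bijOn_image
  exact himage.symm

theorem sum_row_add (ha : IsMagicRectangle a) (k : ℕ) (i : ι) :
    ∑ j, (k + a i j) =
      Fintype.card κ * k + Fintype.card κ * (Fintype.card ι * Fintype.card κ + 1) / 2 := by
  rw [← ha.two_mul_row_sum i, Nat.mul_div_cancel_left _ two_pos, Finset.sum_add_distrib]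
  simp

theorem sum_col_add (ha : IsMagicRectangle a) (k : ℕ) (j : κ) :
    ∑ i, (k + a i j) =
      Fintype.card ι * k + Fintype.card ι * (Fintype.card ι * Fintype.card κ + 1) / 2 := by
  rw [← ha.two_mul_col_sum j, Nat.mul_div_cancel_left _ two_pos, Finset.sum_add_distrib]
  simp

end

theorem vertexSum_add_sum_row_lt_sum_col {V : Type*} [Fintype V] {G : SimpleGraph V} {n : ℕ}
    {f : Sym2 V → ℕ} {a : V → Fin n → ℕ} (ha : IsMagicRectangle a)
    (hf : Set.BijOn f G.edgeSet (Set.Icc 1 G.edgeSet.ncard)) (hn : 4 ≤ n)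
    (hbig : n ^ 2 ≤ 2 * Fintype.card V) (u : V) (j : Fin n) :
    vertexSum G f u + ∑ i, (G.edgeSet.ncard + a u i) < ∑ v, (G.edgeSet.ncard + a v j) := by
  classical
  have two_mul_choose_two (k : ℕ) : (2 * k.choose 2 : ℤ) = k * (k - 1) := by
    qify
    rw [Nat.cast_choose_two]
    ring
  have hsum := vertexSum_add_choose_two_le (v := u) (hf.injOn.mono (G.incidenceSet_subset u))
    fun x hx ↦ (hf.mapsTo (G.incidenceSet_subset u hx)).2
  have hedges : G.edgeSet.ncard ≤ (Fintype.card V).choose 2 := by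
    rw [← G.coe_edgeFinset, Set.ncard_coe_finset]
    exact G.card_edgeFinset_le_card_choose_two
  have hrow := ha.two_mul_row_sum u
  have hcol := ha.two_mul_col_sum j
  simp only [Finset.sum_add_distrib, Finset.sum_const, Finset.card_univ, Fintype.card_fin,
    smul_eq_mul] at hrow hcol ⊢
  zify at *
  have := two_mul_add_lt_of_sq_le (m := Fintype.card V) (n := n) (d := G.degree u)
    (e := G.edgeSet.ncard) (x := vertexSum G f u) hn hbig (by positivity)
    (mod_cast G.degree_lt_card_verts u) (by positivity)
    (by linarith [two_mul_choose_two (Fintype.card V)])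
    (by linarith [two_mul_choose_two (G.degree u)])
  linarith

end IsMagicRectangle

theorem chiLA_join_eq_of_large_order_general {V : Type*} [Fintype V] (G : SimpleGraph V) (n : ℕ)
    (hn : 4 ≤ n) (hpar : Fintype.card V % 2 = n % 2) (hbig : n ^ 2 ≤ 2 * Fintype.card V)
    (hchi : G.chromaticNumber = (chiLA G : ℕ∞)) :
    chiLA (joinEmpty G n) = chiLA G + 1 := by
  have : Nonempty V := Fintype.card_pos_iff.1 (by nlinarith)
  have hchi₀ : chiLA G ≠ 0 := fun h ↦ by
    rw [h, Nat.cast_zero, SimpleGraph.chromaticNumber_eq_zero_iff] at hchi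
    exact not_isEmpty_of_nonempty V hchi
  obtain ⟨f₀, hf₀⟩ := exists_isLocalAntimagic_of_chiLA_ne_zero hchi₀
  obtain ⟨f, hf, hcount⟩ := hf₀.exists_colorCount_eq_chiLA
  obtain ⟨a, ha⟩ : ∃ a : V → Fin n → ℕ, IsMagicRectangle a :=
    exists_isMagicRectangle_of_sq_le (by simpa) (by simpa) (by simpa)
  have hrow := ha.sum_row_add G.edgeSet.ncard
  have hg := hf.joinLabeling (by simpa using ha.bijOn_add G.edgeSet.ncard) hrow fun u j ↦
    (hrow u ▸ ha.vertexSum_add_sum_row_lt_sum_col hf.1 hn hbig u j).ne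
  apply le_antisymm
  · calc
      chiLA (joinEmpty G n) ≤ _ := chiLA_le_colorCount hg
      _ ≤ colorCount G f + 1 := colorCount_joinLabeling_le hrow (ha.sum_col_add _)
      _ = chiLA G + 1 := by rw [hcount]
  · have hlower := (chromaticNumber_add_one_le_joinEmpty (G := G) (show 0 < n by omega)).trans
      hg.chromaticNumber_le_chiLA
    rw [hchi] at hlower
    exact_mod_cast hlower

theorem chiLA_join_eq_of_large_order {V : Type*} [Fintype V] (G : SimpleGraph V)
    (hG : G.Connected) (m n : ℕ) (hm : Fintype.card V = m) (hm3 : 3 ≤ m)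
    (hn : 4 ≤ n) (hpar : m % 2 = n % 2) (hbig : n ^ 2 ≤ 2 * m)
    (hchi : G.chromaticNumber = (chiLA G : ℕ∞)) :
    chiLA (joinEmpty G n) = chiLA G + 1 := by
  subst hm
  exact chiLA_join_eq_of_large_order_general G n hn hpar hbig hchi
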